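/- Let b ≥ 2 be an integer, s ∈ ℕ, d ∈ ℕ, and let a = (a_j)_{j≥1} be a nondecreasing sequence of real weights with a_j ≥ 0 for all j. Then for every n < b^{s·d} one has e(n, s, W_{s,a}) ≥ b^{−∑_{j=1}^s ( d²/2 + (a_j + 1/2)·d )}. -/

import Mathlib

open MeasureTheory Matrix Filter
open scoped ENNReal BigOperators Topology

noncomputable section

/-- The `b`-adic digit of `k : ℕ` at place `b^i` (i.e. the `(i+1)`-st digit). -/
def natDigit (b k i : ℕ) : ℕ := k / b ^ i % b

/-- The `(i+1)`-st `b`-adic digit of a real number `x ∈ [0,1)`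
(using the expansion in which infinitely many digits differ from `b-1`). -/
def realDigit (b : ℕ) (x : ℝ) (i : ℕ) : ℕ := (⌊x * (b : ℝ) ^ (i + 1)⌋ % (b : ℤ)).toNat

/-- The `k`-th one-dimensional `b`-adic Walsh function. -/
def wal1 (b k : ℕ) (x : ℝ) : ℂ :=
  Complex.exp (2 * Real.pi * Complex.I / (b : ℂ) *
    ((∑ i ∈ Finset.range k, natDigit b k i * realDigit b x i : ℕ) : ℂ))

/-- The `k`-th `s`-dimensional `b`-adic Walsh function. -/
def wal (b : ℕ) {s : ℕ} (k : Fin s → ℕ) (x : Fin s → ℝ) : ℂ :=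
  ∏ j, wal1 b (k j) (x j)

/-- The unit cube `[0,1)^s`. -/
def unitCube (s : ℕ) : Set (Fin s → ℝ) := Set.univ.pi fun _ => Set.Ico (0 : ℝ) 1

/-- The `k`-th Walsh coefficient of `f`. -/
def walshCoeff (b : ℕ) {s : ℕ} (f : (Fin s → ℝ) → ℝ) (k : Fin s → ℕ) : ℂ :=
  ∫ x in unitCube s, (f x : ℂ) * (starRingEnd ℂ) (wal b k x)

/-- The generalized Dick weight `μ_a(k)`, one-dimensional case. -/
def dickWt (b : ℕ) (a : ℝ) (k : ℕ) : ℝ :=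
  ∑ i ∈ Finset.range k, if natDigit b k i ≠ 0 then ((i : ℝ) + 1 + a) else 0

/-- The generalized Dick weight `μ_a(k)` for vectors. -/
def dickWtV (b : ℕ) {s : ℕ} (a : Fin s → ℝ) (k : Fin s → ℕ) : ℝ :=
  ∑ j, dickWt b (a j) (k j)

/-- The modified Dick weight `μ'_a(k)`, one-dimensional case. -/
def mdickWt (b : ℕ) (a : ℝ) (k : ℕ) : ℝ :=
  ∑ i ∈ Finset.range k, if natDigit b k i ≠ 0 then max ((i : ℝ) + 1 + a) 1 else 0

/-- The modified Dick weight `μ'_a(k)` for vectors. -/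
def mdickWtV (b : ℕ) {s : ℕ} (a : Fin s → ℝ) (k : Fin s → ℕ) : ℝ :=
  ∑ j, mdickWt b (a j) (k j)

/-- Digitwise subtraction modulo `b` of natural numbers. -/
def dsub (b k k' : ℕ) : ℕ :=
  ∑ i ∈ Finset.range (k + k' + 1), ((natDigit b k i + (b - natDigit b k' i)) % b) * b ^ i

/-- The integral of `f` over the unit cube. -/
def intBox (s : ℕ) (f : (Fin s → ℝ) → ℝ) : ℝ := ∫ x in unitCube s, f x

/-- Membership in the Walsh space `W_{s,a}`: `f` equals its (convergent) Walsh series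
and has finite norm. -/
def MemW (b : ℕ) {s : ℕ} (a : Fin s → ℝ) (f : (Fin s → ℝ) → ℝ) : Prop :=
  (∀ x ∈ unitCube s, HasSum (fun k : Fin s → ℕ => walshCoeff b f k * wal b k x) ((f x : ℂ))) ∧
  BddAbove (Set.range fun k : Fin s → ℕ => ‖walshCoeff b f k‖ * (b : ℝ) ^ dickWtV b a k)

/-- The norm of the Walsh space `W_{s,a}`. -/
def normW (b : ℕ) {s : ℕ} (a : Fin s → ℝ) (f : (Fin s → ℝ) → ℝ) : ℝ :=
  ⨆ k : Fin s → ℕ, ‖walshCoeff b f k‖ * (b : ℝ) ^ dickWtV b a k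

/-- Membership in the modified Walsh space `W'_{s,a}`. -/
def MemW' (b : ℕ) {s : ℕ} (a : Fin s → ℝ) (f : (Fin s → ℝ) → ℝ) : Prop :=
  (∀ x ∈ unitCube s, HasSum (fun k : Fin s → ℕ => walshCoeff b f k * wal b k x) ((f x : ℂ))) ∧
  BddAbove (Set.range fun k : Fin s → ℕ => ‖walshCoeff b f k‖ * (b : ℝ) ^ mdickWtV b a k)

/-- The norm of the modified Walsh space `W'_{s,a}`. -/
def normW' (b : ℕ) {s : ℕ} (a : Fin s → ℝ) (f : (Fin s → ℝ) → ℝ) : ℝ :=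
  ⨆ k : Fin s → ℕ, ‖walshCoeff b f k‖ * (b : ℝ) ^ mdickWtV b a k

/-- The worst-case error of the algorithm `A` over the unit ball of `(H, N)`. -/
def worstErr (s : ℕ) (H : Set ((Fin s → ℝ) → ℝ)) (N : ((Fin s → ℝ) → ℝ) → ℝ)
    (A : ((Fin s → ℝ) → ℝ) → ℝ) : ℝ≥0∞ :=
  ⨆ (f : (Fin s → ℝ) → ℝ) (_ : f ∈ H) (_ : N f ≤ 1), ENNReal.ofReal |intBox s f - A f|

/-- The `n`-th minimal worst-case error over all algorithms using `n` function values
at points of the unit cube. -/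
def minErr (n s : ℕ) (H : Set ((Fin s → ℝ) → ℝ)) (N : ((Fin s → ℝ) → ℝ) → ℝ) : ℝ≥0∞ :=
  ⨅ (t : Fin n → Fin s → ℝ) (_ : ∀ i, t i ∈ unitCube s) (φ : (Fin n → ℝ) → ℝ),
    worstErr s H N fun f => φ fun i => f (t i)

/-- Partial derivative in the `j`-th coordinate. -/
def pd {s : ℕ} (j : Fin s) (f : (Fin s → ℝ) → ℝ) : (Fin s → ℝ) → ℝ :=
  fun x => deriv (fun t => f (Function.update x j t)) (x j)

/-- The mixed partial derivative `f^{(α)}`. -/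
def mpd {s : ℕ} (α : Fin s → ℕ) (f : (Fin s → ℝ) → ℝ) : (Fin s → ℝ) → ℝ :=
  (List.finRange s).foldr (fun j g => (pd j)^[α j] g) f

/-- Membership in the space `S_{s,u}` of smooth functions. -/
def MemS {s : ℕ} (u : Fin s → ℝ) (f : (Fin s → ℝ) → ℝ) : Prop :=
  ContDiff ℝ (⊤ : ℕ∞) f ∧
  BddAbove (Set.range fun α : Fin s → ℕ =>
    (∫ x in unitCube s, |mpd α f x|) / ∏ j, u j ^ α j)

/-- The norm of the space `S_{s,u}`. -/
def normS {s : ℕ} (u : Fin s → ℝ) (f : (Fin s → ℝ) → ℝ) : ℝ :=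
  ⨆ α : Fin s → ℕ, (∫ x in unitCube s, |mpd α f x|) / ∏ j, u j ^ α j

/-- The column vector of the first `m` `b`-adic digits of `k`. -/
def trunc (b m k : ℕ) : Fin m → ZMod b := fun i => (natDigit b k (i : ℕ) : ZMod b)

/-- The `m`-th point of the digital net determined by generating matrices `G`. -/
def netPoint (b : ℕ) {s l d : ℕ} (G : Fin s → Matrix (Fin l) (Fin d) (ZMod b)) (m : ℕ) :
    Fin s → ℝ :=
  fun j => ∑ i : Fin l, (((G j).mulVec (trunc b d m)) i).val / (b : ℝ) ^ ((i : ℕ) + 1)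

/-- The dual net of the digital net determined by `G`. -/
def dualNet (b : ℕ) {s l d : ℕ} (G : Fin s → Matrix (Fin l) (Fin d) (ZMod b)) :
    Set (Fin s → ℕ) :=
  {k | ∑ j, (G j)ᵀ.mulVec (trunc b l (k j)) = 0}

/-- The QMC algorithm given by the digital net with generating matrices `G`. -/
def qmcNet (b : ℕ) {s l d : ℕ} (G : Fin s → Matrix (Fin l) (Fin d) (ZMod b))
    (f : (Fin s → ℝ) → ℝ) : ℝ :=
  ((b : ℝ) ^ d)⁻¹ * ∑ m ∈ Finset.range (b ^ d), f (netPoint b G m)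

/-- `n_j = #{i ∈ ℕ : i + a ≤ 1}` (with `i` ranging over positive integers). -/
def negCount (a : ℝ) : ℕ := Set.ncard {i : ℕ | 0 < i ∧ (i : ℝ) + a ≤ 1}


/-!
Cut the unit cube into its `b ^ (s * d)` elementary cubes of side `b ^ (-d)`. Fewer than
`b ^ (s * d)` sample points miss one of them, and a multiple `f` of its indicator function vanishes
at every sample point, so an algorithm cannot tell `f` from `-f` and errs by at least `|∫ f|` on
one of the two. Normalized to integral one, the indicator function is the Walsh polynomial
`∑ conj (wal_k y) wal_k` over all `k` with `k_j < b ^ d`, where `y` is any point of the cube: its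
coefficients have modulus one and `μ_a(k) ≤ ∑_j ∑_{i ≤ d} (i + a_j)`, so `b ^ (-∑_j ∑_i (i + a_j))`
times it lies in the unit ball. Its Walsh expansion is the Dirichlet kernel identity; orthogonality
of the Walsh functions follows from the same identity, since a square matrix with orthogonal columns
of equal norm also has orthogonal rows.
-/

section

open scoped ComplexConjugate

variable {b : ℕ}

/-! ### Digits -/

lemma natDigit_eq_zero_of_lt_pow {k i : ℕ} (h : k < b ^ i) : natDigit b k i = 0 := by
  rw [natDigit, Nat.div_eq_of_lt h, Nat.zero_mod]

lemma sum_range_eq_sum_range_of_natDigit_eq_zero {M : Type*} [AddCommMonoid M] {k d : ℕ}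
    (hb : 2 ≤ b) (hk : k < b ^ d) {g : ℕ → M} (hg : ∀ i, natDigit b k i = 0 → g i = 0) :
    ∑ i ∈ Finset.range k, g i = ∑ i ∈ Finset.range d, g i := by
  have hzero {r i : ℕ} (hr : k < b ^ r) (hi : i ∉ Finset.range r) : g i = 0 :=
    hg i (natDigit_eq_zero_of_lt_pow (hr.trans_le
      (Nat.pow_le_pow_right (by omega) (by simpa using hi))))
  exact Finset.sum_congr_of_eq_on_inter (fun i _ hi ↦ hzero hk hi)
    (fun i _ hi ↦ hzero (Nat.lt_pow_self (by omega)) hi) (fun _ _ _ ↦ rfl)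

lemma sum_range_pow_prod_natDigit {R : Type*} [CommSemiring R] (b d : ℕ) (g : ℕ → ℕ → R) :
    ∑ k ∈ Finset.range (b ^ d), ∏ i ∈ Finset.range d, g i (natDigit b k i) =
      ∏ i ∈ Finset.range d, ∑ t ∈ Finset.range b, g i t := by
  simp only [Finset.sum_range, Finset.prod_range, Fintype.prod_sum]
  exact Fintype.sum_equiv finFunctionFinEquiv.symm _ _ fun k ↦ rfl

lemma eq_of_forall_natDigit_eq {d m n : ℕ} (hm : m < b ^ d) (hn : n < b ^ d)
    (h : ∀ i < d, natDigit b m i = natDigit b n i) : m = n := by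
  have hdigits : finFunctionFinEquiv.symm ⟨m, hm⟩ = finFunctionFinEquiv.symm ⟨n, hn⟩ :=
    funext fun i ↦ Fin.ext (h i i.2)
  exact congrArg Fin.val (finFunctionFinEquiv.symm.injective hdigits)

lemma realDigit_lt (hb : 0 < b) (x : ℝ) (i : ℕ) : realDigit b x i < b := by
  have hnonneg := Int.emod_nonneg ⌊x * (b : ℝ) ^ (i + 1)⌋ (Int.natCast_ne_zero.2 hb.ne')
  have hlt := Int.emod_lt_of_pos ⌊x * (b : ℝ) ^ (i + 1)⌋ (Int.natCast_pos.2 hb)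
  rw [realDigit]
  omega

lemma floor_mul_pow_div_pow (hb : 0 < b) (x : ℝ) (m e : ℕ) :
    ⌊x * (b : ℝ) ^ (m + e)⌋₊ / b ^ e = ⌊x * (b : ℝ) ^ m⌋₊ := by
  rw [← Nat.floor_div_natCast, Nat.cast_pow, pow_add, ← mul_assoc,
    mul_div_cancel_right₀ _ (by positivity)]

lemma realDigit_eq_natDigit_floor (hb : 0 < b) {x : ℝ} (hx : 0 ≤ x) {d i : ℕ} (hi : i < d) :
    realDigit b x i = natDigit b ⌊x * (b : ℝ) ^ d⌋₊ (d - 1 - i) := by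
  obtain ⟨e, rfl⟩ := Nat.exists_eq_add_of_lt hi
  rw [realDigit, natDigit, show i + e + 1 - 1 - i = e by omega, add_right_comm,
    floor_mul_pow_div_pow hb, ← Int.natCast_floor_eq_floor (by positivity)]
  norm_cast

lemma floor_mul_pow_lt (hb : 0 < b) {x : ℝ} (hx : x ∈ Set.Ico (0 : ℝ) 1) (d : ℕ) :
    ⌊x * (b : ℝ) ^ d⌋₊ < b ^ d := by
  have hpow : (0 : ℝ) < (b : ℝ) ^ d := by positivity
  rw [Nat.floor_lt (mul_nonneg hx.1 hpow.le), Nat.cast_pow]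
  exact mul_lt_of_lt_one_left hpow hx.2

lemma forall_realDigit_eq_iff (hb : 0 < b) {x y : ℝ} (hx : x ∈ Set.Ico (0 : ℝ) 1)
    (hy : y ∈ Set.Ico (0 : ℝ) 1) (d : ℕ) :
    (∀ i < d, realDigit b x i = realDigit b y i) ↔
      ⌊x * (b : ℝ) ^ d⌋₊ = ⌊y * (b : ℝ) ^ d⌋₊ := by
  refine ⟨fun h ↦ eq_of_forall_natDigit_eq (floor_mul_pow_lt hb hx d) (floor_mul_pow_lt hb hy d)
    fun i hi ↦ ?_, fun h i hi ↦ ?_⟩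
  · have hrev := h (d - 1 - i) (by omega)
    rwa [realDigit_eq_natDigit_floor hb hx.1 (by omega : d - 1 - i < d),
      realDigit_eq_natDigit_floor hb hy.1 (by omega : d - 1 - i < d),
      Nat.sub_sub_self (by omega)] at hrev
  · rw [realDigit_eq_natDigit_floor hb hx.1 hi, realDigit_eq_natDigit_floor hb hy.1 hi, h]

/-! ### Walsh functions on the unit interval -/

/-- The primitive root of unity `ω_b = exp (2πi / b)` of which all values of the `b`-adic Walsh
functions are powers. -/
def walshRoot (b : ℕ) : ℂ := Complex.exp (2 * Real.pi * Complex.I / (b : ℂ))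

lemma isPrimitiveRoot_walshRoot (hb : b ≠ 0) : IsPrimitiveRoot (walshRoot b) b :=
  Complex.isPrimitiveRoot_exp b hb

lemma norm_walshRoot (hb : b ≠ 0) : ‖walshRoot b‖ = 1 :=
  (isPrimitiveRoot_walshRoot hb).norm'_eq_one hb

lemma wal1_eq_walshRoot_pow (b k : ℕ) (x : ℝ) :
    wal1 b k x =
      walshRoot b ^ (∑ i ∈ Finset.range k, natDigit b k i * realDigit b x i) := by
  rw [wal1, walshRoot, ← Complex.exp_nat_mul, mul_comm]

lemma norm_wal1 (hb : b ≠ 0) (k : ℕ) (x : ℝ) : ‖wal1 b k x‖ = 1 := by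
  rw [wal1_eq_walshRoot_pow, norm_pow, norm_walshRoot hb, one_pow]

lemma wal1_eq_prod (hb : 2 ≤ b) {k d : ℕ} (hk : k < b ^ d) (x : ℝ) :
    wal1 b k x =
      ∏ i ∈ Finset.range d, (walshRoot b ^ realDigit b x i) ^ natDigit b k i := by
  rw [wal1_eq_walshRoot_pow, sum_range_eq_sum_range_of_natDigit_eq_zero hb hk
    (fun i hi ↦ by rw [hi, zero_mul]), ← Finset.prod_pow_eq_pow_sum]
  simp only [← pow_mul, mul_comm]

lemma measurable_wal1 (b k : ℕ) : Measurable (wal1 b k) := by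
  have hdigit (i : ℕ) : Measurable fun x ↦ realDigit b x i :=
    (Measurable.of_discrete (f := fun z : ℤ ↦ (z % (b : ℤ)).toNat)).comp
      (Int.measurable_floor.comp (measurable_id.mul_const _))
  unfold wal1
  fun_prop

lemma wal1_eq_of_floor_eq (hb : 2 ≤ b) {k d : ℕ} (hk : k < b ^ d) {x y : ℝ}
    (hx : 0 ≤ x) (hy : 0 ≤ y) (h : ⌊x * (b : ℝ) ^ d⌋₊ = ⌊y * (b : ℝ) ^ d⌋₊) :
    wal1 b k x = wal1 b k y := by
  have hb0 : 0 < b := by omega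
  rw [wal1_eq_prod hb hk, wal1_eq_prod hb hk]
  refine Finset.prod_congr rfl fun i hi ↦ ?_
  rw [realDigit_eq_natDigit_floor hb0 hx (Finset.mem_range.1 hi),
    realDigit_eq_natDigit_floor hb0 hy (Finset.mem_range.1 hi), h]

lemma sum_range_walshRoot_pow_mul_conj_pow (hb : b ≠ 0) {p q : ℕ} (hp : p < b) (hq : q < b) :
    ∑ t ∈ Finset.range b, (walshRoot b ^ p * conj (walshRoot b ^ q)) ^ t =
      if p = q then (b : ℂ) else 0 := by
  have hroot := isPrimitiveRoot_walshRoot hb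
  have hne : walshRoot b ^ q ≠ 0 := pow_ne_zero _ (hroot.ne_zero hb)
  rw [← Complex.inv_eq_conj (by rw [norm_pow, norm_walshRoot hb, one_pow])]
  split_ifs with hpq
  · simp [hpq, mul_inv_cancel₀ hne]
  · have hne_one : walshRoot b ^ p * (walshRoot b ^ q)⁻¹ ≠ 1 := fun h ↦
      hpq (hroot.pow_inj hp hq ((mul_inv_eq_one₀ hne).1 h))
    have hpow : (walshRoot b ^ p * (walshRoot b ^ q)⁻¹) ^ b = 1 := by
      rw [mul_pow, inv_pow, pow_right_comm, pow_right_comm _ q, hroot.pow_eq_one, one_pow,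
        one_pow, inv_one, mul_one]
    rw [geom_sum_eq hne_one, hpow, sub_self, zero_div]

lemma sum_range_wal1_mul_conj_wal1 (hb : 2 ≤ b) {x y : ℝ} (hx : x ∈ Set.Ico (0 : ℝ) 1)
    (hy : y ∈ Set.Ico (0 : ℝ) 1) (d : ℕ) :
    ∑ k ∈ Finset.range (b ^ d), wal1 b k x * conj (wal1 b k y) =
      if ⌊x * (b : ℝ) ^ d⌋₊ = ⌊y * (b : ℝ) ^ d⌋₊ then (b : ℂ) ^ d else 0 := by
  have hb0 : 0 < b := by omega
  calc ∑ k ∈ Finset.range (b ^ d), wal1 b k x * conj (wal1 b k y)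
      = ∑ k ∈ Finset.range (b ^ d), ∏ i ∈ Finset.range d,
          (walshRoot b ^ realDigit b x i * conj (walshRoot b ^ realDigit b y i)) ^
            natDigit b k i := by
        refine Finset.sum_congr rfl fun k hk ↦ ?_
        rw [wal1_eq_prod hb (Finset.mem_range.1 hk), wal1_eq_prod hb (Finset.mem_range.1 hk),
          map_prod, ← Finset.prod_mul_distrib]
        simp only [map_pow, mul_pow]
    _ = ∏ i ∈ Finset.range d, ∑ t ∈ Finset.range b,
          (walshRoot b ^ realDigit b x i * conj (walshRoot b ^ realDigit b y i)) ^ t :=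
        sum_range_pow_prod_natDigit b d _
    _ = ∏ i ∈ Finset.range d, if realDigit b x i = realDigit b y i then (b : ℂ) else 0 :=
        Finset.prod_congr rfl fun i _ ↦ sum_range_walshRoot_pow_mul_conj_pow hb0.ne'
          (realDigit_lt hb0 x i) (realDigit_lt hb0 y i)
    _ = _ := by
        simp only [Finset.prod_ite_zero, Finset.mem_range, forall_realDigit_eq_iff hb0 hx hy,
          Finset.prod_const, Finset.card_range]

lemma floor_div_mul_self {N : ℕ} (hN : 0 < N) (m : ℕ) : ⌊(m : ℝ) / N * N⌋₊ = m := by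
  rw [div_mul_cancel₀ _ (by positivity), Nat.floor_natCast]

lemma natCast_div_mem_Ico {m N : ℕ} (hm : m < N) : (m : ℝ) / N ∈ Set.Ico (0 : ℝ) 1 :=
  ⟨by positivity, (div_lt_one (by exact_mod_cast Nat.zero_lt_of_lt hm)).2 (by exact_mod_cast hm)⟩

/-- The matrix of values of the first `b ^ d` Walsh functions at the grid points `m / b ^ d`. -/
def walshMatrix (b d : ℕ) : Matrix (Fin (b ^ d)) (Fin (b ^ d)) ℂ :=
  Matrix.of fun k m ↦ wal1 b k (m / (b ^ d : ℕ))

lemma conjTranspose_mul_walshMatrix (hb : 2 ≤ b) (d : ℕ) :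
    (walshMatrix b d)ᴴ * walshMatrix b d = (b : ℂ) ^ d • 1 := by
  have hpos : 0 < b ^ d := by positivity
  ext m m'
  have hkernel := sum_range_wal1_mul_conj_wal1 hb (natCast_div_mem_Ico m'.2)
    (natCast_div_mem_Ico m.2) d
  rw [← Nat.cast_pow (α := ℝ), floor_div_mul_self hpos, floor_div_mul_self hpos,
    Finset.sum_range] at hkernel
  simpa [Matrix.mul_apply, walshMatrix, Matrix.one_apply, mul_comm, Fin.ext_iff, eq_comm]
    using hkernel

lemma walshMatrix_mul_conjTranspose (hb : 2 ≤ b) (d : ℕ) :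
    walshMatrix b d * (walshMatrix b d)ᴴ = (b : ℂ) ^ d • 1 := by
  have hne : (b : ℂ) ^ d ≠ 0 := pow_ne_zero _ (Nat.cast_ne_zero.2 (by omega))
  have hinv : (((b : ℂ) ^ d)⁻¹ • (walshMatrix b d)ᴴ) * walshMatrix b d = 1 := by
    rw [Matrix.smul_mul, conjTranspose_mul_walshMatrix hb, inv_smul_smul₀ hne]
  rw [← mul_eq_one_comm.1 hinv, Matrix.mul_smul, smul_inv_smul₀ hne]

lemma mem_Ico_div_iff_floor_eq {N : ℕ} (hN : 0 < N) (m : ℕ) (x : ℝ) :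
    x ∈ Set.Ico ((m : ℝ) / N) ((m + 1) / N) ↔ 0 ≤ x ∧ ⌊x * N⌋₊ = m := by
  have hN' : (0 : ℝ) < N := Nat.cast_pos.2 hN
  rw [Set.mem_Ico, div_le_iff₀ hN', lt_div_iff₀ hN']
  constructor
  · intro h
    have hx : 0 ≤ x := nonneg_of_mul_nonneg_left (m.cast_nonneg.trans h.1) hN'
    exact ⟨hx, (Nat.floor_eq_iff (by positivity)).2 h⟩
  · rintro ⟨hx, hfloor⟩
    exact (Nat.floor_eq_iff (by positivity)).1 hfloor

lemma Ico_zero_one_eq_biUnion {N : ℕ} (hN : 0 < N) :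
    Set.Ico (0 : ℝ) 1 = ⋃ m ∈ Finset.range N, Set.Ico ((m : ℝ) / N) ((m + 1) / N) := by
  have hN' : (0 : ℝ) < N := Nat.cast_pos.2 hN
  ext x
  simp only [Set.mem_iUnion, mem_Ico_div_iff_floor_eq hN, Finset.mem_range, exists_prop,
    Set.mem_Ico]
  constructor
  · rintro ⟨hx, hx1⟩
    exact ⟨_, (Nat.floor_lt (by positivity)).2 (mul_lt_of_lt_one_left hN' hx1), hx, rfl⟩
  · rintro ⟨_, hm, hx, rfl⟩
    exact ⟨hx, (mul_lt_iff_lt_one_left hN').1 ((Nat.floor_lt (by positivity)).1 hm)⟩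

lemma setIntegral_Ico_zero_one_eq_sum {E : Type*} [NormedAddCommGroup E] [NormedSpace ℝ E]
    [CompleteSpace E] {N : ℕ} (hN : 0 < N) {f : ℝ → E}
    (hf : ∀ x ∈ Set.Ico (0 : ℝ) 1, f x = f (⌊x * N⌋₊ / N)) :
    ∫ x in Set.Ico (0 : ℝ) 1, f x = (N : ℝ)⁻¹ • ∑ m ∈ Finset.range N, f (m / N) := by
  have hconst : ∀ m ∈ Finset.range N,
      Set.EqOn f (fun _ ↦ f (m / N)) (Set.Ico ((m : ℝ) / N) ((m + 1) / N)) := by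
    intro m hm x hx
    have hx01 : x ∈ Set.Ico (0 : ℝ) 1 := by
      rw [Ico_zero_one_eq_biUnion hN]
      exact Set.mem_biUnion hm hx
    rw [hf x hx01, ((mem_Ico_div_iff_floor_eq hN m x).1 hx).2]
  have hvol (m : ℕ) : volume.real (Set.Ico ((m : ℝ) / N) ((m + 1) / N)) = (N : ℝ)⁻¹ := by
    rw [Real.volume_real_Ico_of_le (by gcongr; simp), ← sub_div, add_sub_cancel_left, one_div]
  rw [Ico_zero_one_eq_biUnion hN, integral_biUnion_finset _ (fun _ _ ↦ measurableSet_Ico),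
    Finset.smul_sum]
  · refine Finset.sum_congr rfl fun m hm ↦ ?_
    rw [setIntegral_congr_fun measurableSet_Ico (hconst m hm), setIntegral_const, hvol]
  · intro m _ m' _ hne
    refine Set.disjoint_left.2 fun x hx hx' ↦ hne ?_
    rw [← ((mem_Ico_div_iff_floor_eq hN m x).1 hx).2,
      ((mem_Ico_div_iff_floor_eq hN m' x).1 hx').2]
  · exact fun m hm ↦ (integrableOn_congr_fun (hconst m hm) measurableSet_Ico).2
      (integrableOn_const measure_Ico_lt_top.ne)

/-- Both functions are constant on the cells of a fine enough grid, which turns the integral into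
an entry of `walshMatrix b d * (walshMatrix b d)ᴴ`. -/
lemma setIntegral_wal1_mul_conj_wal1 (hb : 2 ≤ b) (k l : ℕ) :
    ∫ x in Set.Ico (0 : ℝ) 1, wal1 b k x * conj (wal1 b l x) = if k = l then 1 else 0 := by
  have hb0 : 0 < b := by omega
  obtain ⟨d, hk, hl⟩ : ∃ d, k < b ^ d ∧ l < b ^ d :=
    ⟨max k l, (le_max_left k l).trans_lt (Nat.lt_pow_self (by omega)),
      (le_max_right k l).trans_lt (Nat.lt_pow_self (by omega))⟩
  have hpos : 0 < b ^ d := by positivity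
  have hstep {k : ℕ} (hk : k < b ^ d) {x : ℝ} (hx : x ∈ Set.Ico (0 : ℝ) 1) :
      wal1 b k x = wal1 b k (⌊x * (b ^ d : ℕ)⌋₊ / (b ^ d : ℕ)) := by
    refine wal1_eq_of_floor_eq hb hk hx.1 (by positivity) ?_
    rw [← Nat.cast_pow, floor_div_mul_self hpos]
  have hentry := congrFun (congrFun (walshMatrix_mul_conjTranspose hb d) ⟨k, hk⟩) ⟨l, hl⟩
  simp only [Matrix.mul_apply, walshMatrix, Matrix.conjTranspose_apply, Matrix.of_apply,
    Matrix.smul_apply, Matrix.one_apply, Fin.mk.injEq] at hentry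
  rw [setIntegral_Ico_zero_one_eq_sum hpos fun x hx ↦ by rw [← hstep hk hx, ← hstep hl hx],
    Finset.sum_range]
  simp only [starRingEnd_apply, hentry]
  have hne : (b : ℂ) ≠ 0 := Nat.cast_ne_zero.2 hb0.ne'
  split_ifs <;> simp [hne]

/-! ### Walsh functions on the unit cube -/

variable {s : ℕ}

lemma setIntegral_wal_mul_conj_wal (hb : 2 ≤ b) (k l : Fin s → ℕ) :
    ∫ x in unitCube s, wal b k x * conj (wal b l x) = if k = l then 1 else 0 := by
  simp only [wal, map_prod, ← Finset.prod_mul_distrib]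
  rw [unitCube, volume_pi, Measure.restrict_pi_pi,
    integral_fintype_prod_eq_prod fun j x ↦ wal1 b (k j) x * conj (wal1 b (l j) x)]
  simp only [setIntegral_wal1_mul_conj_wal1 hb, Fintype.prod_ite_zero, Finset.prod_const_one,
    funext_iff]

lemma norm_wal (hb : b ≠ 0) (k : Fin s → ℕ) (x : Fin s → ℝ) : ‖wal b k x‖ = 1 := by
  simp [wal, norm_wal1 hb]

lemma measurable_wal (b : ℕ) (k : Fin s → ℕ) : Measurable (wal b k) :=
  Finset.measurable_fun_prod _ fun j _ ↦ (measurable_wal1 b (k j)).comp (measurable_pi_apply j)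

lemma measurableSet_unitCube (s : ℕ) : MeasurableSet (unitCube s) :=
  MeasurableSet.univ_pi fun _ ↦ measurableSet_Ico

lemma volume_unitCube (s : ℕ) : volume (unitCube s) = 1 := by
  simp [unitCube, volume_pi_pi]

lemma integrableOn_wal_mul_conj_wal (hb : b ≠ 0) (k l : Fin s → ℕ) :
    IntegrableOn (fun x ↦ wal b k x * conj (wal b l x)) (unitCube s) := by
  refine IntegrableOn.of_bound (by simp [volume_unitCube]) ?_ 1 (.of_forall fun x ↦ ?_)
  · exact ((measurable_wal b k).mul
      (Complex.continuous_conj.measurable.comp (measurable_wal b l))).aestronglyMeasurable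
  · rw [norm_mul, RCLike.norm_conj, norm_wal hb, norm_wal hb, one_mul]

section WalshPolynomial

variable {K : Finset (Fin s → ℕ)} {c : (Fin s → ℕ) → ℂ} {f : (Fin s → ℝ) → ℝ}

lemma walshCoeff_eq_ite_of_eq_sum (hb : 2 ≤ b)
    (hf : ∀ x ∈ unitCube s, (f x : ℂ) = ∑ k ∈ K, c k * wal b k x) (k : Fin s → ℕ) :
    walshCoeff b f k = if k ∈ K then c k else 0 := by
  calc walshCoeff b f k
      = ∫ x in unitCube s, ∑ l ∈ K, c l * (wal b l x * conj (wal b k x)) :=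
        setIntegral_congr_fun (measurableSet_unitCube s) fun x hx ↦ by
          simp only [hf x hx, Finset.sum_mul, mul_assoc]
    _ = ∑ l ∈ K, c l * ∫ x in unitCube s, wal b l x * conj (wal b k x) := by
        rw [integral_finsetSum _ fun l _ ↦
          (integrableOn_wal_mul_conj_wal (by omega) l k).integrable.const_mul (c l)]
        simp only [integral_const_mul]
    _ = _ := by simp [setIntegral_wal_mul_conj_wal hb]

lemma norm_walshCoeff_mul_rpow_le_of_eq_sum (hb : 2 ≤ b)
    (hf : ∀ x ∈ unitCube s, (f x : ℂ) = ∑ k ∈ K, c k * wal b k x) {a : Fin s → ℝ} {C : ℝ}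
    (hC : 0 ≤ C) (hc : ∀ k ∈ K, ‖c k‖ * (b : ℝ) ^ dickWtV b a k ≤ C) (k : Fin s → ℕ) :
    ‖walshCoeff b f k‖ * (b : ℝ) ^ dickWtV b a k ≤ C := by
  rw [walshCoeff_eq_ite_of_eq_sum hb hf]
  split_ifs with hk
  · exact hc k hk
  · simpa using hC

lemma memW_of_eq_sum (hb : 2 ≤ b)
    (hf : ∀ x ∈ unitCube s, (f x : ℂ) = ∑ k ∈ K, c k * wal b k x) (a : Fin s → ℝ) :
    MemW b a f := by
  have hcoeff := walshCoeff_eq_ite_of_eq_sum hb hf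
  refine ⟨fun x hx ↦ ?_, ∑ k ∈ K, ‖c k‖ * (b : ℝ) ^ dickWtV b a k, ?_⟩
  · have hsum : (f x : ℂ) = ∑ k ∈ K, walshCoeff b f k * wal b k x :=
      (hf x hx).trans (Finset.sum_congr rfl fun k hk ↦ by rw [hcoeff, if_pos hk])
    rw [hsum]
    exact hasSum_sum_of_ne_finset_zero fun k hk ↦ by rw [hcoeff, if_neg hk, zero_mul]
  · rintro _ ⟨k, rfl⟩
    exact norm_walshCoeff_mul_rpow_le_of_eq_sum hb hf (Finset.sum_nonneg fun _ _ ↦ by positivity)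
      (fun l hl ↦ Finset.single_le_sum (f := fun k ↦ ‖c k‖ * (b : ℝ) ^ dickWtV b a k)
        (fun _ _ ↦ by positivity) hl) k

lemma normW_le_of_eq_sum (hb : 2 ≤ b)
    (hf : ∀ x ∈ unitCube s, (f x : ℂ) = ∑ k ∈ K, c k * wal b k x) {a : Fin s → ℝ} {C : ℝ}
    (hC : 0 ≤ C) (hc : ∀ k ∈ K, ‖c k‖ * (b : ℝ) ^ dickWtV b a k ≤ C) : normW b a f ≤ C :=
  ciSup_le (norm_walshCoeff_mul_rpow_le_of_eq_sum hb hf hC hc)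

end WalshPolynomial

lemma walshCoeff_neg (b : ℕ) (f : (Fin s → ℝ) → ℝ) (k : Fin s → ℕ) :
    walshCoeff b (-f) k = -walshCoeff b f k := by
  simp [walshCoeff, integral_neg]

lemma MemW.neg {a : Fin s → ℝ} {f : (Fin s → ℝ) → ℝ} (hf : MemW b a f) : MemW b a (-f) := by
  refine ⟨fun x hx ↦ ?_, ?_⟩
  · simpa [walshCoeff_neg] using (hf.1 x hx).neg
  · simpa only [walshCoeff_neg, norm_neg] using hf.2

lemma normW_neg (b : ℕ) (a : Fin s → ℝ) (f : (Fin s → ℝ) → ℝ) :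
    normW b a (-f) = normW b a f := by
  simp only [normW, walshCoeff_neg, norm_neg]

lemma walshCoeff_zero_eq_intBox (b : ℕ) (f : (Fin s → ℝ) → ℝ) :
    walshCoeff b f 0 = (intBox s f : ℂ) := by
  simp [walshCoeff, intBox, wal, wal1, integral_complex_ofReal]

/-! ### Fooling functions -/

/-- The multiple of the indicator function of the `b`-adic elementary cube of side `b ^ (-d)`
containing `y` that has integral one. It has this meaning for `x` and `y` in the unit cube only:
`⌊·⌋₊` sends all negative coordinates to `0`. -/
def cellBump (b d : ℕ) (y x : Fin s → ℝ) : ℝ :=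
  if ∀ j, ⌊x j * (b : ℝ) ^ d⌋₊ = ⌊y j * (b : ℝ) ^ d⌋₊ then (b : ℝ) ^ (s * d) else 0

/-- The set of `k` with `k j < b ^ d` for all `j`, i.e. of those with at most `d` digits in each
coordinate. -/
def digitBox (b s d : ℕ) : Finset (Fin s → ℕ) :=
  Fintype.piFinset fun _ ↦ Finset.range (b ^ d)

lemma mem_digitBox {d : ℕ} {k : Fin s → ℕ} : k ∈ digitBox b s d ↔ ∀ j, k j < b ^ d := by
  simp [digitBox]

lemma card_digitBox (b s d : ℕ) : (digitBox b s d).card = b ^ (s * d) := by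
  simp [digitBox, ← pow_mul, mul_comm]

lemma cellBump_eq_sum (hb : 2 ≤ b) (d : ℕ) {x y : Fin s → ℝ} (hx : x ∈ unitCube s)
    (hy : y ∈ unitCube s) :
    (cellBump b d y x : ℂ) = ∑ k ∈ digitBox b s d, conj (wal b k y) * wal b k x := by
  calc (cellBump b d y x : ℂ)
      = ∏ j, if ⌊x j * (b : ℝ) ^ d⌋₊ = ⌊y j * (b : ℝ) ^ d⌋₊ then (b : ℂ) ^ d else 0 := by
        rw [Fintype.prod_ite_zero, Finset.prod_const, Finset.card_fin, ← pow_mul, mul_comm d s,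
          cellBump]
        split_ifs <;> simp
    _ = ∏ j, ∑ k ∈ Finset.range (b ^ d), wal1 b k (x j) * conj (wal1 b k (y j)) :=
        Finset.prod_congr rfl fun j _ ↦
          (sum_range_wal1_mul_conj_wal1 hb (hx j trivial) (hy j trivial) d).symm
    _ = ∑ k ∈ digitBox b s d, conj (wal b k y) * wal b k x := by
        rw [Finset.prod_univ_sum]
        simp only [digitBox, wal, map_prod, Finset.prod_mul_distrib, mul_comm]

lemma smul_cellBump_eq_sum (hb : 2 ≤ b) (d : ℕ) (c : ℝ) {x y : Fin s → ℝ} (hx : x ∈ unitCube s)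
    (hy : y ∈ unitCube s) :
    (((c • cellBump b d y) x : ℝ) : ℂ) =
      ∑ k ∈ digitBox b s d, (c * conj (wal b k y)) * wal b k x := by
  simp only [Pi.smul_apply, smul_eq_mul, Complex.ofReal_mul, cellBump_eq_sum hb d hx hy,
    Finset.mul_sum, mul_assoc]

lemma intBox_smul_cellBump (hb : 2 ≤ b) (d : ℕ) (c : ℝ) {y : Fin s → ℝ} (hy : y ∈ unitCube s) :
    intBox s (c • cellBump b d y) = c := by
  have hzero : (0 : Fin s → ℕ) ∈ digitBox b s d := mem_digitBox.2 fun _ ↦ by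
    simp only [Pi.zero_apply]
    positivity
  have hcoeff := walshCoeff_eq_ite_of_eq_sum hb
    (fun x hx ↦ smul_cellBump_eq_sum hb d c hx hy) 0
  rw [walshCoeff_zero_eq_intBox, if_pos hzero] at hcoeff
  exact Complex.ofReal_injective (hcoeff.trans (by simp [wal, wal1]))

lemma exists_mem_unitCube_forall_cellBump_eq_zero (hb : 0 < b) {n d : ℕ} (hn : n < b ^ (s * d))
    (t : Fin n → Fin s → ℝ) : ∃ y ∈ unitCube s, ∀ i, cellBump b d y (t i) = 0 := by
  have hpos : 0 < b ^ d := by positivity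
  let cellIndex (i : Fin n) (j : Fin s) : ℕ := ⌊t i j * (b : ℝ) ^ d⌋₊
  obtain ⟨m, hm, hmissed⟩ : ∃ m ∈ digitBox b s d, m ∉ Finset.univ.image cellIndex :=
    Finset.exists_mem_notMem_of_card_lt_card <|
      calc (Finset.univ.image cellIndex).card ≤ n := Finset.card_image_le.trans (by simp)
        _ < (digitBox b s d).card := by rwa [card_digitBox]
  refine ⟨fun j ↦ m j / (b ^ d : ℕ), fun j _ ↦ natCast_div_mem_Ico (mem_digitBox.1 hm j),
    fun i ↦ if_neg fun hcell ↦ hmissed ?_⟩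
  refine Finset.mem_image.2 ⟨i, Finset.mem_univ i, funext fun j ↦ (hcell j).trans ?_⟩
  rw [← Nat.cast_pow, floor_div_mul_self hpos]

lemma ofReal_abs_intBox_le_worstErr {H : Set ((Fin s → ℝ) → ℝ)} {N : ((Fin s → ℝ) → ℝ) → ℝ}
    {A : ((Fin s → ℝ) → ℝ) → ℝ} {f : (Fin s → ℝ) → ℝ} (hf : f ∈ H) (hNf : N f ≤ 1)
    (hf' : -f ∈ H) (hNf' : N (-f) ≤ 1) (hA : A (-f) = A f) :
    ENNReal.ofReal |intBox s f| ≤ worstErr s H N A := by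
  have herr {g : (Fin s → ℝ) → ℝ} (hg : g ∈ H) (hNg : N g ≤ 1) :
      ENNReal.ofReal |intBox s g - A g| ≤ worstErr s H N A :=
    le_iSup₂_of_le g hg (le_iSup_of_le hNg le_rfl)
  have hneg : intBox s (-f) = -intBox s f := integral_neg f
  have habs : |intBox s f| ≤ max |intBox s f - A f| |intBox s (-f) - A (-f)| := by
    rw [hneg, hA]
    grind
  rcases le_max_iff.1 habs with h | h
  · exact (ENNReal.ofReal_le_ofReal h).trans (herr hf hNf)
  · exact (ENNReal.ofReal_le_ofReal h).trans (herr hf' hNf')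

theorem ofReal_rpow_neg_le_minErr (hb : 2 ≤ b) {d n : ℕ} (hn : n < b ^ (s * d)) {a : Fin s → ℝ}
    {μ : ℝ} (hμ : ∀ k ∈ digitBox b s d, dickWtV b a k ≤ μ) :
    ENNReal.ofReal ((b : ℝ) ^ (-μ)) ≤ minErr n s {f | MemW b a f} (normW b a) := by
  have hb0 : (0 : ℝ) < b := by positivity
  refine le_iInf fun t ↦ le_iInf fun _ ↦ le_iInf fun φ ↦ ?_
  obtain ⟨y, hy, hvanish⟩ := exists_mem_unitCube_forall_cellBump_eq_zero (by omega) hn t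
  set f : (Fin s → ℝ) → ℝ := (b : ℝ) ^ (-μ) • cellBump b d y with hf
  have hexpand : ∀ x ∈ unitCube s, (f x : ℂ) =
      ∑ k ∈ digitBox b s d, (((b : ℝ) ^ (-μ) : ℝ) * conj (wal b k y)) * wal b k x :=
    fun x hx ↦ smul_cellBump_eq_sum hb d _ hx hy
  have hmem : MemW b a f := memW_of_eq_sum hb hexpand a
  have hnorm : normW b a f ≤ 1 := by
    refine normW_le_of_eq_sum hb hexpand zero_le_one fun k hk ↦ ?_
    rw [norm_mul, RCLike.norm_conj, norm_wal (by omega), mul_one, Complex.norm_real,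
      Real.norm_of_nonneg (by positivity), ← Real.rpow_add hb0]
    exact Real.rpow_le_one_of_one_le_of_nonpos (by exact_mod_cast (by omega : 1 ≤ b))
      (by linarith [hμ k hk])
  have hsample : (fun i ↦ (-f) (t i)) = fun i ↦ f (t i) := by simp [hf, hvanish]
  have hint : |intBox s f| = (b : ℝ) ^ (-μ) := by
    rw [hf, intBox_smul_cellBump hb d _ hy, abs_of_pos (by positivity)]
  rw [← hint]
  exact ofReal_abs_intBox_le_worstErr hmem hnorm hmem.neg ((normW_neg b a f).trans_le hnorm)
    (congrArg φ hsample)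

lemma sum_range_add_one_add (a : ℝ) (d : ℕ) :
    ∑ i ∈ Finset.range d, ((i : ℝ) + 1 + a) = (d : ℝ) ^ 2 / 2 + (a + 1 / 2) * d := by
  induction d with
  | zero => simp
  | succ d ih =>
    rw [Finset.sum_range_succ, ih]
    push_cast
    ring

lemma dickWt_le (hb : 2 ≤ b) {d k : ℕ} (hk : k < b ^ d) {a : ℝ} (ha : -1 ≤ a) :
    dickWt b a k ≤ (d : ℝ) ^ 2 / 2 + (a + 1 / 2) * d := by
  rw [dickWt, sum_range_eq_sum_range_of_natDigit_eq_zero hb hk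
    (fun i hi ↦ if_neg (not_not.2 hi)), ← sum_range_add_one_add]
  refine Finset.sum_le_sum fun i _ ↦ ?_
  split_ifs
  · linarith [i.cast_nonneg (α := ℝ)]
  · rfl

end

theorem statement6_general (b : ℕ) (hb : 2 ≤ b) (s d : ℕ) (a : Fin s → ℝ)
    (ha : ∀ j, -1 ≤ a j) (n : ℕ) (hn : n < b ^ (s * d)) :
    ENNReal.ofReal ((b : ℝ) ^ (-(∑ j : Fin s, ((d : ℝ) ^ 2 / 2 + (a j + 1 / 2) * d)))) ≤
      minErr n s {f | MemW b a f} (normW b a) :=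
  ofReal_rpow_neg_le_minErr hb hn fun _ hk ↦
    Finset.sum_le_sum fun j _ ↦ dickWt_le hb (mem_digitBox.1 hk j) (ha j)

/-- for nonnegative nondecreasing weights and `n < b^{s·d}`,
`e(n, s, W_{s,a}) ≥ b^{-∑_{j=1}^s (d²/2 + (a_j + 1/2)·d)}`. -/
theorem statement6 (b : ℕ) (hb : 2 ≤ b) (s : ℕ) (hs : 0 < s) (d : ℕ) (hd : 0 < d)
    (a : ℕ → ℝ) (ha : Monotone a) (ha0 : ∀ j, 0 ≤ a j)
    (n : ℕ) (hn : n < b ^ (s * d)) :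
    ENNReal.ofReal
        ((b : ℝ) ^ (-(∑ j : Fin s, ((d : ℝ) ^ 2 / 2 + (a j + 1 / 2) * d)))) ≤
      minErr n s {f | MemW b (fun j : Fin s => a j) f} (normW b (fun j : Fin s => a j)) :=
  statement6_general b hb s d _ (fun j ↦ by linarith [ha0 j]) n hn

end
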